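/- Let G = C_n be the unweighted cycle graph on n vertices with n odd, n ≥ 3, and let Γ_fec be the family of fractional edge covers of C_n. Then the constant density ρ_0 ≡ 2/n is extremal and Mod_2(Γ_fec) = 4/n. Equivalently, for the family Γ_star of stars of C_n, Mod_2(Γ_star) = n/4. -/

import Mathlib

open Finset

noncomputable section
open scoped Classical

variable {V : Type*}

/-- The set of admissible densities for a family `Γ` of objects on the edge set of `G`.
Densities are elements of `ℝ^E_{≥0}`, modeled as nonnegative functions on `Sym2 V`
vanishing outside the edge set of `G`. `ρ` is admissible if `ℓ_ρ(γ) ≥ 1` for all `γ ∈ Γ`. -/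
def Adm [Fintype V] [DecidableEq V] (G : SimpleGraph V) (Γ : Set (Sym2 V → ℝ)) :
    Set (Sym2 V → ℝ) :=
  {ρ | (∀ e, 0 ≤ ρ e) ∧ (∀ e ∉ G.edgeSet, ρ e = 0) ∧
    ∀ γ ∈ Γ, 1 ≤ ∑ e ∈ G.edgeFinset, γ e * ρ e}

/-- The `p`-energy of a density `ρ` with edge weights `σ`: `Σ_e σ(e) ρ(e)^p`. -/
def energy [Fintype V] [DecidableEq V] (p : ℝ) (σ : Sym2 V → ℝ) (G : SimpleGraph V)
    (ρ : Sym2 V → ℝ) : ℝ :=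
  ∑ e ∈ G.edgeFinset, σ e * ρ e ^ p

/-- The `p`-modulus of a family `Γ` with edge weights `σ`:
the infimum of the `p`-energy over admissible densities. -/
def Modulus [Fintype V] [DecidableEq V] (p : ℝ) (σ : Sym2 V → ℝ) (G : SimpleGraph V)
    (Γ : Set (Sym2 V → ℝ)) : ℝ :=
  sInf (energy p σ G '' Adm G Γ)

/-- The unweighted 2-energy `Σ_e ρ(e)²`. -/
def energy2 [Fintype V] [DecidableEq V] (G : SimpleGraph V) (ρ : Sym2 V → ℝ) : ℝ :=
  ∑ e ∈ G.edgeFinset, ρ e ^ 2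

/-- The unweighted 2-modulus. -/
def Mod2 [Fintype V] [DecidableEq V] (G : SimpleGraph V) (Γ : Set (Sym2 V → ℝ)) : ℝ :=
  sInf (energy2 G '' Adm G Γ)

/-- `C` is an edge cover of `G`: a set of edges of `G` meeting every vertex. -/
def IsEdgeCover [Fintype V] [DecidableEq V] (G : SimpleGraph V) (C : Finset (Sym2 V)) : Prop :=
  ↑C ⊆ G.edgeSet ∧ ∀ v : V, ∃ e ∈ C, v ∈ e

/-- The family `Γ_ec` of indicator vectors of edge covers of `G`. -/
def Γec [Fintype V] [DecidableEq V] (G : SimpleGraph V) : Set (Sym2 V → ℝ) :=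
  {γ | ∃ C : Finset (Sym2 V), IsEdgeCover G C ∧ γ = fun e => if e ∈ C then 1 else 0}

/-- The family `Γ_fec` of fractional edge covers of `G`: nonnegative vectors on the edge
set with `Σ_{e ∈ δ(v)} γ(e) ≥ 1` at every vertex `v`. -/
def Γfec [Fintype V] [DecidableEq V] (G : SimpleGraph V) : Set (Sym2 V → ℝ) :=
  {γ | (∀ e, 0 ≤ γ e) ∧ (∀ e ∉ G.edgeSet, γ e = 0) ∧
    ∀ v : V, 1 ≤ ∑ e ∈ G.incidenceFinset v, γ e}

/-- The family `Γ_star` of indicator vectors of the stars `δ(v)`, `v ∈ V`. -/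
def Γstar [Fintype V] [DecidableEq V] (G : SimpleGraph V) : Set (Sym2 V → ℝ) :=
  {γ | ∃ v : V, γ = fun e => if e ∈ G.incidenceFinset v then 1 else 0}

/-- The subgraph of `G` whose edge set is the support `{e : γ(e) > 0}` of `γ`. -/
def suppGraph (G : SimpleGraph V) (γ : Sym2 V → ℝ) : SimpleGraph V where
  Adj u v := G.Adj u v ∧ 0 < γ s(u, v)
  symm := by
    constructor
    intro u v h
    refine ⟨h.1.symm, ?_⟩
    rw [Sym2.eq_swap]
    exact h.2
  loopless := ⟨fun v h => G.loopless.irrefl v h.1⟩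

open SimpleGraph

/-! Summing the covering inequality of a fractional edge cover `γ` over all vertices counts every
edge twice, so `Σ_e γ(e) ≥ |V| / 2`: this makes `2 / |V|` admissible for `Γfec`. On a `d`-regular
graph the constant `1 / d` is itself a fractional edge cover, so every density `ρ` admissible for
`Γfec` has `Σ_e ρ(e) ≥ d = |E| · 2 / |V|`, and by convexity no density of at least that total mass
has less energy than the constant one. The stars are dual to this: a density is admissible for
`Γstar` exactly when it is a fractional edge cover, and among these, by the same two facts, the
constant `1 / d` has the least energy. -/

theorem sum_sum_incidenceFinset [Fintype V] [DecidableEq V] (G : SimpleGraph V) {M : Type*}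
    [AddCommMonoid M] (f : Sym2 V → M) :
    ∑ v, ∑ e ∈ G.incidenceFinset v, f e = 2 • ∑ e ∈ G.edgeFinset, f e := by
  calc ∑ v, ∑ e ∈ G.incidenceFinset v, f e
      = ∑ e ∈ G.edgeFinset, ∑ _v ∈ e.toFinset, f e :=
        sum_comm' fun v e => by simp [incidenceFinset_eq_filter, and_comm]
    _ = ∑ e ∈ G.edgeFinset, 2 • f e := sum_congr rfl fun e he => by
        rw [sum_const, Sym2.card_toFinset_of_not_isDiag e (G.not_isDiag_of_mem_edgeFinset he)]
    _ = 2 • ∑ e ∈ G.edgeFinset, f e := (smul_sum ..).symm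

theorem cast_card_edgeFinset_of_isRegularOfDegree [Fintype V] {G : SimpleGraph V} {d : ℕ}
    (hG : G.IsRegularOfDegree d) : (#G.edgeFinset : ℝ) = Fintype.card V * d / 2 := by
  have hsum : Fintype.card V * d = 2 * #G.edgeFinset := by
    rw [← sum_degrees_eq_twice_card_edges, sum_congr rfl fun v _ => hG v, sum_const, card_univ,
      smul_eq_mul]
  rw [eq_div_iff two_ne_zero, mul_comm]
  exact_mod_cast hsum.symm

/-- The constant density `ρ ≡ c` on the edges of `G`, extended by `0` to all of `Sym2 V` as `Adm`
and `Γfec` require. -/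
def constDensity (G : SimpleGraph V) (c : ℝ) : Sym2 V → ℝ :=
  G.edgeSet.indicator fun _ => c

section ConstDensity

variable {G : SimpleGraph V} {c : ℝ}

theorem constDensity_of_mem {e : Sym2 V} (he : e ∈ G.edgeSet) : constDensity G c e = c :=
  Set.indicator_of_mem he _

theorem constDensity_of_notMem {e : Sym2 V} (he : e ∉ G.edgeSet) : constDensity G c e = 0 :=
  Set.indicator_of_notMem he _

theorem constDensity_nonneg (hc : 0 ≤ c) (e : Sym2 V) : 0 ≤ constDensity G c e :=
  Set.indicator_nonneg (fun _ _ => hc) e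

theorem ite_mem_edgeFinset_eq_constDensity [Fintype G.edgeSet]
    [DecidablePred (· ∈ G.edgeFinset)] :
    (fun e => if e ∈ G.edgeFinset then c else 0) = constDensity G c := by
  ext e
  simp only [constDensity, Set.indicator_apply, mem_edgeFinset]

theorem sum_mul_constDensity [Fintype V] (f : Sym2 V → ℝ) :
    ∑ e ∈ G.edgeFinset, f e * constDensity G c e = (∑ e ∈ G.edgeFinset, f e) * c := by
  rw [sum_mul]
  exact sum_congr rfl fun e he => by rw [constDensity_of_mem (mem_edgeFinset.1 he)]

variable [Fintype V] [DecidableEq V]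

theorem sum_incidenceFinset_constDensity (v : V) :
    ∑ e ∈ G.incidenceFinset v, constDensity G c e = G.degree v * c := by
  rw [sum_congr rfl fun e he => constDensity_of_mem ((G.mem_incidenceFinset v e).1 he).1,
    sum_const, card_incidenceFinset_eq_degree, nsmul_eq_mul]

theorem energy2_constDensity : energy2 G (constDensity G c) = #G.edgeFinset * c ^ 2 := by
  rw [energy2, sum_congr rfl fun e he => by rw [constDensity_of_mem (mem_edgeFinset.1 he)],
    sum_const, nsmul_eq_mul]

theorem isLeast_energy2_constDensity {S : Set (Sym2 V → ℝ)} (hc : 0 ≤ c)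
    (hmem : constDensity G c ∈ S) (hsum : ∀ ρ ∈ S, #G.edgeFinset * c ≤ ∑ e ∈ G.edgeFinset, ρ e) :
    IsLeast (energy2 G '' S) (energy2 G (constDensity G c)) := by
  refine ⟨Set.mem_image_of_mem _ hmem, ?_⟩
  rintro _ ⟨ρ, hρ, rfl⟩
  calc energy2 G (constDensity G c)
      = 2 * c * (#G.edgeFinset * c) - #G.edgeFinset * c ^ 2 := by rw [energy2_constDensity]; ring
    _ ≤ 2 * c * ∑ e ∈ G.edgeFinset, ρ e - #G.edgeFinset * c ^ 2 := by gcongr; exact hsum ρ hρ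
    _ = ∑ e ∈ G.edgeFinset, (2 * c * ρ e - c ^ 2) := by
        rw [sum_sub_distrib, mul_sum, sum_const, nsmul_eq_mul]
    _ ≤ energy2 G ρ := sum_le_sum fun e _ => by linarith [two_mul_le_add_sq c (ρ e)]

end ConstDensity

section EdgeCovers

variable [Fintype V] [DecidableEq V] {G : SimpleGraph V}

theorem constDensity_mem_Γfec {c : ℝ} (hc : 0 ≤ c) (h : ∀ v, 1 ≤ G.degree v * c) :
    constDensity G c ∈ Γfec G :=
  ⟨constDensity_nonneg hc, fun _ => constDensity_of_notMem,
    fun v => (h v).trans_eq (sum_incidenceFinset_constDensity v).symm⟩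

theorem card_le_two_mul_sum_of_mem_Γfec {γ : Sym2 V → ℝ} (hγ : γ ∈ Γfec G) :
    (Fintype.card V : ℝ) ≤ 2 * ∑ e ∈ G.edgeFinset, γ e := by
  calc (Fintype.card V : ℝ) = ∑ _v : V, 1 := by simp
    _ ≤ ∑ v, ∑ e ∈ G.incidenceFinset v, γ e := sum_le_sum fun v _ => hγ.2.2 v
    _ = 2 * ∑ e ∈ G.edgeFinset, γ e := by rw [sum_sum_incidenceFinset, two_nsmul, two_mul]

theorem constDensity_mem_adm_Γfec [Nonempty V] :
    constDensity G (2 / Fintype.card V) ∈ Adm G (Γfec G) := by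
  refine ⟨constDensity_nonneg (by positivity), fun _ => constDensity_of_notMem, fun γ hγ => ?_⟩
  have hcard : (0 : ℝ) < Fintype.card V := by exact_mod_cast Fintype.card_pos
  rw [sum_mul_constDensity, mul_div_assoc', one_le_div hcard, mul_comm]
  exact card_le_two_mul_sum_of_mem_Γfec hγ

theorem adm_Γstar_eq_Γfec (G : SimpleGraph V) : Adm G (Γstar G) = Γfec G := by
  have star_sum (v : V) (ρ : Sym2 V → ℝ) :
      ∑ e ∈ G.edgeFinset, (if e ∈ G.incidenceFinset v then 1 else 0) * ρ e =
        ∑ e ∈ G.incidenceFinset v, ρ e := by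
    simp only [ite_mul, one_mul, zero_mul, sum_ite_mem,
      inter_eq_right.2 (G.incidenceFinset_subset v)]
  ext ρ
  simp only [Adm, Γstar, Γfec, Set.mem_ofPred_eq, forall_exists_index, forall_eq_apply_imp_iff,
    star_sum]

end EdgeCovers

section Regular

variable [Fintype V] [DecidableEq V] {G : SimpleGraph V} {d : ℕ}

theorem constDensity_inv_mem_Γfec (hd : d ≠ 0) (hG : G.IsRegularOfDegree d) :
    constDensity G (d : ℝ)⁻¹ ∈ Γfec G :=
  constDensity_mem_Γfec (by positivity) fun v => by
    rw [hG v, mul_inv_cancel₀ (Nat.cast_ne_zero.2 hd)]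

theorem degree_le_sum_of_mem_adm_Γfec (hd : d ≠ 0) (hG : G.IsRegularOfDegree d)
    {ρ : Sym2 V → ℝ} (hρ : ρ ∈ Adm G (Γfec G)) : (d : ℝ) ≤ ∑ e ∈ G.edgeFinset, ρ e := by
  have hcover := hρ.2.2 _ (constDensity_inv_mem_Γfec hd hG)
  simp only [mul_comm _ (ρ _), sum_mul_constDensity, ← div_eq_mul_inv] at hcover
  exact (one_le_div (by positivity)).1 hcover

theorem isLeast_energy2_adm_Γfec [Nonempty V] (hd : d ≠ 0) (hG : G.IsRegularOfDegree d) :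
    IsLeast (energy2 G '' Adm G (Γfec G)) (energy2 G (constDensity G (2 / Fintype.card V))) := by
  refine isLeast_energy2_constDensity (by positivity) constDensity_mem_adm_Γfec fun ρ hρ => ?_
  calc #G.edgeFinset * (2 / Fintype.card V : ℝ) = d := by
        rw [cast_card_edgeFinset_of_isRegularOfDegree hG]; field_simp
    _ ≤ ∑ e ∈ G.edgeFinset, ρ e := degree_le_sum_of_mem_adm_Γfec hd hG hρ

theorem isLeast_energy2_Γfec (hd : d ≠ 0) (hG : G.IsRegularOfDegree d) :
    IsLeast (energy2 G '' Γfec G) (energy2 G (constDensity G (d : ℝ)⁻¹)) := by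
  refine isLeast_energy2_constDensity (by positivity) (constDensity_inv_mem_Γfec hd hG)
    fun γ hγ => ?_
  calc #G.edgeFinset * (d : ℝ)⁻¹ = Fintype.card V / 2 := by
        rw [cast_card_edgeFinset_of_isRegularOfDegree hG]; field_simp
    _ ≤ ∑ e ∈ G.edgeFinset, γ e := by linarith [card_le_two_mul_sum_of_mem_Γfec hγ]

theorem mod2_cycleGraph_odd_general [Nonempty V] (hd : d ≠ 0) (hG : G.IsRegularOfDegree d) :
    constDensity G (2 / Fintype.card V) ∈ Adm G (Γfec G) ∧
    energy2 G (constDensity G (2 / Fintype.card V)) = Mod2 G (Γfec G) ∧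
    Mod2 G (Γfec G) = 2 * d / Fintype.card V ∧
    Mod2 G (Γstar G) = Fintype.card V / (2 * d) := by
  have hfec : Mod2 G (Γfec G) = energy2 G (constDensity G (2 / Fintype.card V)) :=
    (isLeast_energy2_adm_Γfec hd hG).csInf_eq
  have hstar : Mod2 G (Γstar G) = energy2 G (constDensity G (d : ℝ)⁻¹) := by
    rw [Mod2, adm_Γstar_eq_Γfec, (isLeast_energy2_Γfec hd hG).csInf_eq]
  refine ⟨constDensity_mem_adm_Γfec, hfec.symm, ?_, ?_⟩
  · rw [hfec, energy2_constDensity, cast_card_edgeFinset_of_isRegularOfDegree hG]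
    field_simp
  · rw [hstar, energy2_constDensity, cast_card_edgeFinset_of_isRegularOfDegree hG]
    field_simp

end Regular

theorem isRegularOfDegree_cycleGraph {n : ℕ} (hn : 3 ≤ n) :
    (cycleGraph n).IsRegularOfDegree 2 := by
  obtain ⟨m, rfl⟩ := Nat.exists_eq_add_of_le' hn
  exact fun _ => cycleGraph_degree_three_le

/-- For the cycle graph `C_n` with `n` odd, `n ≥ 3`: the constant density `ρ₀ ≡ 2/n` is
extremal for `Mod_2(Γ_fec)`, `Mod_2(Γ_fec) = 4/n`, and `Mod_2(Γ_star) = n/4`. -/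
theorem mod2_cycleGraph_odd (n : ℕ) (hn : 3 ≤ n) (hodd : Odd n) :
    (fun e => if e ∈ (cycleGraph n).edgeFinset then 2 / (n : ℝ) else 0)
      ∈ Adm (cycleGraph n) (Γfec (cycleGraph n)) ∧
    energy2 (cycleGraph n) (fun e => if e ∈ (cycleGraph n).edgeFinset then 2 / (n : ℝ) else 0)
      = Mod2 (cycleGraph n) (Γfec (cycleGraph n)) ∧
    Mod2 (cycleGraph n) (Γfec (cycleGraph n)) = 4 / (n : ℝ) ∧
    Mod2 (cycleGraph n) (Γstar (cycleGraph n)) = (n : ℝ) / 4 := by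
  have : NeZero n := ⟨by lia⟩
  -- `convert` reconciles the decidable adjacency of `cycleGraph n` with the classical one.
  have hmod := mod2_cycleGraph_odd_general (G := cycleGraph n) two_ne_zero
    (by convert isRegularOfDegree_cycleGraph hn)
  simpa only [ite_mem_edgeFinset_eq_constDensity, Fintype.card_fin, Nat.cast_ofNat,
    show (2 * 2 : ℝ) = 4 by norm_num] using hmod
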